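/- arXiv:1906.10029 — 5 statements merged into one kernel-verified Lean document; each statement's English description precedes it below -/
import Mathlib

section
/- Let (Σₙ)_{n∈ℕ} be a sequence of nonempty metric spaces and pₙ : Σₙ₊₁ → Σₙ a sequence of maps such that: (i) each pₙ is a covering map; (ii) every point of Σₙ₊₁ has an open neighbourhood on which pₙ restricts to an isometry (dist(pₙ a, pₙ b) = dist(a, b) for all a, b in the neighbourhood); (iii) for every n, any two points of Σₙ are joined by a continuous path of finite length. Let L = {x ∈ ∏ₙ Σₙ : pₙ(xₙ₊₁) = xₙ for all n}, endowed with the subspace topology from the product topology. Then for every y ∈ L, the set {y' ∈ L : ∃ C, ∀ n, dist(yₙ, y'ₙ) ≤ C} (the leaf of y) is dense in L. -/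
open Set unitInterval

theorem variation_lift_le {E X : Type*} [MetricSpace E] [MetricSpace X] (p : E → X)
    (hloc : ∀ x : E, ∃ U : Set E, IsOpen U ∧ x ∈ U ∧
      ∀ a ∈ U, ∀ b ∈ U, dist (p a) (p b) = dist a b) (Γ : C(I, E)) :
    eVariationOn Γ univ ≤ eVariationOn (p ∘ Γ) univ := by
  choose U hUo hxU hU using hloc
  obtain ⟨t, t0, tm, ⟨n, tn⟩, ht⟩ := exists_monotone_Icc_subset_open_cover_unitInterval
    (c := fun x : E => Γ ⁻¹' (U x)) (fun x => (hUo x).preimage Γ.continuous)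
    (fun s _ => mem_iUnion.2 ⟨Γ s, hxU _⟩)
  have huniv : (univ : Set I) = Icc (t 0) (t n) := by
    rw [t0, tn n le_rfl]; ext x; simp [unitInterval.le_one', unitInterval.nonneg']
  rw [huniv, ← eVariationOn.sum' _ tm, ← eVariationOn.sum' _ tm]
  refine Finset.sum_le_sum fun i _ => le_of_eq ?_
  obtain ⟨x, hx⟩ := ht i
  unfold eVariationOn
  refine iSup_congr fun q => Finset.sum_congr rfl fun j _ => ?_
  have h1 := hx (q.2.2.2 (j+1))
  have h2 := hx (q.2.2.2 j)
  simp only [Function.comp, edist_dist]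
  rw [hU x _ h1 _ h2]

theorem leaf_base
    {S : ℕ → Type*} [∀ n, MetricSpace (S n)]
    (p : ∀ n, S (n + 1) → S n)
    (hcov : ∀ n, IsCoveringMap (p n))
    (hloc : ∀ n, ∀ x : S (n + 1), ∃ U : Set (S (n + 1)), IsOpen U ∧ x ∈ U ∧
      ∀ a ∈ U, ∀ b ∈ U, dist (p n a) (p n b) = dist a b)
    (hpath : ∀ n, ∀ x y : S n, ∃ γ : ℝ → S n, ContinuousOn γ (Set.Icc 0 1) ∧
      γ 0 = x ∧ γ 1 = y ∧ eVariationOn γ (Set.Icc 0 1) ≠ ⊤)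
    (y : ∀ n, S n) (hy : ∀ n, p n (y (n + 1)) = y n) (x : S 0) :
    ∃ z : ∀ n, S n, (∀ n, p n (z (n + 1)) = z n) ∧ z 0 = x ∧
      ∃ C : ℝ, ∀ n, dist (y n) (z n) ≤ C := by
  obtain ⟨γ, hγ, h0, h1, hV⟩ := hpath 0 (y 0) x
  set V := eVariationOn γ (Set.Icc 0 1) with hVdef
  let T : ℕ → Type _ := fun n => {Γ : C(I, S n) // Γ 0 = y n ∧ eVariationOn Γ univ ≤ V}
  let Γ0 : T 0 := ⟨⟨fun t => γ t, continuousOn_iff_continuous_domRestrict.1 hγ⟩, h0,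
    eVariationOn.comp_le_of_monotoneOn γ (fun t : I => (t : ℝ)) (fun a _ b _ h => h)
      (fun a _ => a.2)⟩
  have step : ∀ n (G : T n), ∃ G' : T (n+1), p n ∘ G'.1 = G.1 := by
    rintro n ⟨G, hG0, hGV⟩
    obtain ⟨G', h, h'⟩ := (hcov n).exists_path_lifts G (y (n+1)) (by rw [hG0, hy])
    refine ⟨⟨G', h', (variation_lift_le (p n) (hloc n) G').trans ?_⟩, h⟩
    rw [h]; exact hGV
  choose f hf using step
  let G : ∀ n, T n := fun n => Nat.rec Γ0 f n
  refine ⟨fun n => (G n).1 1, fun n => congrFun (hf n (G n)) 1, h1,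
    V.toReal, fun n => ?_⟩
  have := (eVariationOn.edist_le (G n).1 (mem_univ 0) (mem_univ 1)).trans (G n).2.2
  rw [(G n).2.1] at this
  rw [dist_edist]
  exact ENNReal.toReal_mono hV this

theorem leaf_step (N : ℕ) :
    ∀ {S : ℕ → Type*} [∀ n, MetricSpace (S n)]
    (p : ∀ n, S (n + 1) → S n)
    (hcov : ∀ n, IsCoveringMap (p n))
    (hloc : ∀ n, ∀ x : S (n + 1), ∃ U : Set (S (n + 1)), IsOpen U ∧ x ∈ U ∧
      ∀ a ∈ U, ∀ b ∈ U, dist (p n a) (p n b) = dist a b)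
    (hpath : ∀ n, ∀ x y : S n, ∃ γ : ℝ → S n, ContinuousOn γ (Set.Icc 0 1) ∧
      γ 0 = x ∧ γ 1 = y ∧ eVariationOn γ (Set.Icc 0 1) ≠ ⊤)
    (y : ∀ n, S n) (hy : ∀ n, p n (y (n + 1)) = y n)
    (x : ∀ n, S n) (hx : ∀ n, p n (x (n + 1)) = x n),
    ∃ z : ∀ n, S n, (∀ n, p n (z (n + 1)) = z n) ∧ (∀ n ≤ N, z n = x n) ∧
      ∃ C : ℝ, ∀ n, dist (y n) (z n) ≤ C := by
  induction N with
  | zero =>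
    intro S _ p hcov hloc hpath y hy x hx
    obtain ⟨z, hz, hz0, hC⟩ := leaf_base p hcov hloc hpath y hy (x 0)
    exact ⟨z, hz, fun n hn => by obtain rfl : n = 0 := by omega
                                 exact hz0, hC⟩
  | succ N ih =>
    intro S _ p hcov hloc hpath y hy x hx
    obtain ⟨z, hz, hzx, C, hC⟩ := ih (S := fun n => S (n+1)) (fun n => p (n+1))
      (fun n => hcov _) (fun n => hloc _) (fun n => hpath _) (fun n => y (n+1))
      (fun n => hy _) (fun n => x (n+1)) (fun n => hx _)
    refine ⟨fun n => Nat.casesOn n (p 0 (z 0)) z, ?_, ?_, max C (dist (y 0) (p 0 (z 0))), ?_⟩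
    · rintro (_ | n)
      · rfl
      · exact hz n
    · rintro (_ | n) hn
      · show p 0 (z 0) = x 0
        rw [hzx 0 (Nat.zero_le _), hx]
      · exact hzx n (by omega)
    · rintro (_ | n)
      · exact le_max_right _ _
      · exact (hC n).trans (le_max_left _ _)

/-- Minimality of the lamination defined by a tower of locally isometric covering maps of
nonempty, rectifiably path-connected metric spaces: in the inverse limit `L`, the leaf of
every point (the set of points at uniformly bounded coordinate-wise distance) is dense. -/
theorem leaf_dense_in_inverse_limit_of_tower
    {S : ℕ → Type*} [∀ n, MetricSpace (S n)] [∀ n, Nonempty (S n)]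
    (p : ∀ n, S (n + 1) → S n)
    (hcov : ∀ n, IsCoveringMap (p n))
    (hloc : ∀ n, ∀ x : S (n + 1), ∃ U : Set (S (n + 1)), IsOpen U ∧ x ∈ U ∧
      ∀ a ∈ U, ∀ b ∈ U, dist (p n a) (p n b) = dist a b)
    (hpath : ∀ n, ∀ x y : S n, ∃ γ : ℝ → S n, ContinuousOn γ (Set.Icc 0 1) ∧
      γ 0 = x ∧ γ 1 = y ∧ eVariationOn γ (Set.Icc 0 1) ≠ ⊤)
    (y : {x : ∀ n, S n // ∀ n, p n (x (n + 1)) = x n}) :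
    Dense {y' : {x : ∀ n, S n // ∀ n, p n (x (n + 1)) = x n} |
      ∃ C : ℝ, ∀ n, dist (y.1 n) (y'.1 n) ≤ C} := by
  intro x
  choose z hz hzx hC using fun N => leaf_step N p hcov hloc hpath y.1 y.2 x.1 x.2
  refine mem_closure_of_tendsto (f := fun N => (⟨z N, hz N⟩ :
    {x : ∀ n, S n // ∀ n, p n (x (n + 1)) = x n})) (b := Filter.atTop) ?_
    (Filter.Eventually.of_forall fun N => hC N)
  rw [tendsto_subtype_rng, tendsto_pi_nhds]
  intro n
  refine tendsto_const_nhds.congr' ?_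
  filter_upwards [Filter.eventually_ge_atTop n] with N hN
  exact (hzx N n hN).symm
end

section
/- Let (Σₙ)_{n∈ℕ} be metric spaces, pₙ : Σₙ₊₁ → Σₙ be 1-Lipschitz maps, and Qₙ ⊆ Σₙ be finite subsets satisfying pₙ(Qₙ₊₁) ⊆ Qₙ for every n. Let x = (xₙ) be a coherent sequence, i.e. pₙ(xₙ₊₁) = xₙ for all n. Suppose there exists C ≥ 0 such that for infinitely many n there is a point q ∈ Qₙ with dist(xₙ, q) ≤ C. Then there exists a coherent sequence y = (yₙ) (pₙ(yₙ₊₁) = yₙ for all n) with yₙ ∈ Qₙ and dist(xₙ, yₙ) ≤ C for every n. -/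
/-- Kőnig's lemma for towers of nonempty finite types. -/
theorem konig_tower {A : ℕ → Type*} [∀ n, Finite (A n)] [∀ n, Nonempty (A n)]
    (f : ∀ n, A (n + 1) → A n) : ∃ y : ∀ n, A n, ∀ n, f n (y (n + 1)) = y n := by
  have key : ∀ m, ∀ q : A m, ∃ y : ∀ n, A n, y m = q ∧ ∀ n < m, f n (y (n + 1)) = y n := by
    intro m
    induction m with
    | zero =>
      intro q
      exact ⟨Function.update (fun n => Classical.arbitrary (A n)) 0 q, by simp, by simp⟩
    | succ m ih =>
      intro q
      obtain ⟨y, hy, hc⟩ := ih (f m q)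
      refine ⟨Function.update y (m + 1) q, by simp, fun n hn => ?_⟩
      rw [Function.update_of_ne (by omega : n ≠ m + 1)]
      rcases Nat.lt_succ_iff_lt_or_eq.mp hn with h | rfl
      · rw [Function.update_of_ne (by omega : n + 1 ≠ m + 1)]
        exact hc n h
      · simp [hy]
  letI : ∀ n, TopologicalSpace (A n) := fun _ => ⊥
  haveI : ∀ n, DiscreteTopology (A n) := fun _ => ⟨rfl⟩
  have hcl : ∀ m, IsClosed {y : ∀ n, A n | ∀ n < m, f n (y (n + 1)) = y n} := by
    intro m
    simp only [Set.setOf_forall]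
    refine isClosed_iInter fun n => isClosed_iInter fun _ => ?_
    exact isClosed_eq (continuous_of_discreteTopology.comp (continuous_apply (n + 1)))
      (continuous_apply n)
  obtain ⟨y, hy⟩ := IsCompact.nonempty_iInter_of_sequence_nonempty_isCompact_isClosed
    (fun m => {y : ∀ n, A n | ∀ n < m, f n (y (n + 1)) = y n})
    (fun m y hy n hn => hy n (by omega))
    (fun m => by
      obtain ⟨y, -, hy⟩ := key m (Classical.arbitrary _)
      exact ⟨y, hy⟩)
    (hcl 0).isCompact hcl
  exact ⟨y, fun n => Set.mem_iInter.mp hy (n + 1) n (by omega)⟩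

/-- Diagonal argument: if a coherent sequence `x` for a tower of 1-Lipschitz maps stays
within distance `C` of the finite marked sets `Q n` for infinitely many `n`, then there
is a coherent sequence of marked points within distance `C` of `x` at every level. -/
theorem exists_coherent_marked_sequence_at_bounded_distance
    {S : ℕ → Type*} [∀ n, MetricSpace (S n)]
    (p : ∀ n, S (n + 1) → S n)
    (hp : ∀ n, ∀ a b : S (n + 1), dist (p n a) (p n b) ≤ dist a b)
    (Q : ∀ n, Set (S n)) (hQfin : ∀ n, (Q n).Finite)
    (hQ : ∀ n, ∀ q ∈ Q (n + 1), p n q ∈ Q n)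
    (x : ∀ n, S n) (hx : ∀ n, p n (x (n + 1)) = x n)
    (C : ℝ) (hC : 0 ≤ C)
    (hinf : {n : ℕ | ∃ q ∈ Q n, dist (x n) q ≤ C}.Infinite) :
    ∃ y : ∀ n, S n, (∀ n, p n (y (n + 1)) = y n) ∧
      ∀ n, y n ∈ Q n ∧ dist (x n) (y n) ≤ C := by
  have step : ∀ n, ∀ q, (q ∈ Q (n + 1) ∧ dist (x (n + 1)) q ≤ C) →
      (p n q ∈ Q n ∧ dist (x n) (p n q) ≤ C) := by
    rintro n q ⟨h1, h2⟩
    refine ⟨hQ n q h1, ?_⟩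
    rw [← hx n]
    exact (hp n _ _).trans h2
  have down : ∀ k n, (∃ q, q ∈ Q (n + k) ∧ dist (x (n + k)) q ≤ C) →
      ∃ q, q ∈ Q n ∧ dist (x n) q ≤ C := by
    intro k
    induction k with
    | zero => exact fun n h => h
    | succ k ih =>
      rintro n ⟨q, hq⟩
      exact ih n ⟨p (n + k) q, step (n + k) q hq⟩
  have hne : ∀ n, Nonempty {q : S n // q ∈ Q n ∧ dist (x n) q ≤ C} := by
    intro n
    obtain ⟨m, hm, hnm⟩ := hinf.exists_gt n
    obtain ⟨k, rfl⟩ := Nat.exists_eq_add_of_le hnm.le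
    obtain ⟨q, hq⟩ := down k n hm
    exact ⟨⟨q, hq⟩⟩
  have hfin : ∀ n, Finite {q : S n // q ∈ Q n ∧ dist (x n) q ≤ C} := fun n =>
    ((hQfin n).subset (fun q hq => hq.1 : {q | q ∈ Q n ∧ dist (x n) q ≤ C} ⊆ Q n)).to_subtype
  obtain ⟨y, hy⟩ := konig_tower
    (A := fun n => {q : S n // q ∈ Q n ∧ dist (x n) q ≤ C})
    (fun n q => ⟨p n q.1, step n q.1 q.2⟩)
  exact ⟨fun n => (y n).1, fun n => congrArg Subtype.val (hy n), fun n => (y n).2⟩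
end

section
/- For every natural number N ≥ 2 there exist permutations a, b of Fin (N+1) such that the cycle type of a is {N} (that is, a is a single cycle of length N and fixes exactly one point of Fin (N+1)) and the commutator a·b·a⁻¹·b⁻¹ has no fixed point (for every x ∈ Fin (N+1), (a·b·a⁻¹·b⁻¹)(x) ≠ x). -/
/-- For every `N ≥ 2`, there are permutations `a b` of `Fin (N+1)` such that `a` is a single
`N`-cycle (fixing exactly one point) and the commutator `a * b * a⁻¹ * b⁻¹` has no fixed
point. -/
theorem exists_perms_cycle_and_fixed_point_free_commutator
    (N : ℕ) (hN : 2 ≤ N) :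
    ∃ a b : Equiv.Perm (Fin (N + 1)),
      a.cycleType = {N} ∧ ∀ x : Fin (N + 1), (a * b * a⁻¹ * b⁻¹) x ≠ x := by
  have hlt : N - 1 < N + 1 := by omega
  have hval : ∀ j : Fin (N + 1), ((Fin.cycleRange (⟨N - 1, hlt⟩ : Fin (N + 1)) j : Fin (N + 1)) : ℕ)
      = if (j : ℕ) < N - 1 then (j : ℕ) + 1 else if (j : ℕ) = N - 1 then 0 else (j : ℕ) := by
    intro j
    split_ifs with h1 h2
    · exact Fin.coe_cycleRange_of_lt (Fin.lt_def.2 h1)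
    · rw [Fin.cycleRange_of_eq (Fin.ext h2)]; rfl
    · rw [Fin.cycleRange_of_gt (Fin.lt_def.2 (by simp only; omega))]
  refine ⟨Fin.cycleRange ⟨N - 1, hlt⟩, Fin.revPerm, ?_, ?_⟩
  · rw [Fin.cycleType_cycleRange]
    · congr 1
      simp only
      omega
    · intro h
      have := congrArg Fin.val h
      simp at this
      omega
  · intro x hx
    generalize hA : Fin.cycleRange (⟨N - 1, hlt⟩ : Fin (N + 1)) = A at *
    obtain ⟨y, rfl⟩ : ∃ y, x = Fin.revPerm (A y) :=
      ⟨A⁻¹ (Fin.revPerm⁻¹ x), by simp⟩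
    have h : A (Fin.rev y) = Fin.rev (A y) := by simpa using hx
    have h' := congrArg Fin.val h
    rw [hval, Fin.val_rev, Fin.val_rev, hval] at h'
    have := y.isLt
    split_ifs at h' <;> omega
end

section
/- For every natural number N ≥ 4 there exist permutations a, b, c of Fin (N+1) such that the cycle type of a is {N} (that is, a is a single cycle of length N and fixes exactly one point of Fin (N+1)) and the permutation a·(b·c·b⁻¹·c⁻¹) has no fixed point (for every x ∈ Fin (N+1), (a·b·c·b⁻¹·c⁻¹)(x) ≠ x). -/
/-- Multiplying `a`, whose only fixed point is `n`, by the 3-cycle `n → p → q → n`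
(a commutator of two transpositions) gives a fixed-point free permutation if `a q ≠ p`. -/
theorem aux_fixed_point_free {α : Type*} [DecidableEq α] (a : Equiv.Perm α) (n p q : α)
    (hnp : n ≠ p) (hnq : n ≠ q) (hpq : p ≠ q) (hn : a n = n) (ha : ∀ x, x ≠ n → a x ≠ x)
    (hq : a q ≠ p) (x : α) :
    (a * Equiv.swap n q * Equiv.swap q p * (Equiv.swap n q)⁻¹ * (Equiv.swap q p)⁻¹) x ≠ x := by
  have hp : a p ≠ n := fun h => hnp (a.injective (hn.trans h.symm))
  have := ha x
  simp only [Equiv.swap_inv, Equiv.Perm.mul_apply, Equiv.swap_apply_def]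
  grind

/-- For every `N ≥ 4`, there are permutations `a b c` of `Fin (N+1)` such that `a` is a single
`N`-cycle (fixing exactly one point) and `a * (b * c * b⁻¹ * c⁻¹)` has no fixed point. -/
theorem exists_perms_cycle_and_fixed_point_free_product_with_commutator
    (N : ℕ) (hN : 4 ≤ N) :
    ∃ a b c : Equiv.Perm (Fin (N + 1)),
      a.cycleType = {N} ∧ ∀ x : Fin (N + 1), (a * b * c * b⁻¹ * c⁻¹) x ≠ x := by
  let i : Fin (N + 1) := ⟨N - 1, by omega⟩
  have hi : i ≠ 0 := by
    intro h
    have := congrArg Fin.val h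
    simp [i] at this
    omega
  have hlt : ∀ x : Fin (N + 1), x.val < N - 1 → (Fin.cycleRange i x).val = x.val + 1 :=
    fun x hx => Fin.coe_cycleRange_of_lt (i := x) (j := i) hx
  refine ⟨Fin.cycleRange i, Equiv.swap (Fin.last N) 0, Equiv.swap 0 ⟨2, by omega⟩, ?_,
    aux_fixed_point_free _ _ _ _ ?_ ?_ ?_ ?_ ?_ ?_⟩
  · rw [Fin.cycleType_cycleRange hi]
    congr 1
    simp [i]
    omega
  · intro h
    have := congrArg Fin.val h
    simp at this
    omega
  · intro h
    have := congrArg Fin.val h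
    simp at this
    omega
  · intro h
    have := congrArg Fin.val h
    simp at this
  · apply Fin.cycleRange_of_gt
    rw [Fin.lt_def]
    simp [i]
    omega
  · intro x hx h
    have hx' : x.val ≠ N := fun e => hx (Fin.ext e)
    by_cases hxi : x = i
    · rw [hxi, Fin.cycleRange_self] at h
      exact hi h.symm
    · have hv : x.val ≠ N - 1 := fun e => hxi (Fin.ext e)
      have h1 := hlt x (by omega)
      rw [h] at h1
      omega
  · intro h
    have h1 := hlt 0 (by simp; omega)
    rw [h] at h1
    simp at h1
end

section
/- Work in the upper half-plane ℍ with its hyperbolic metric. Let λ > 1, D ≥ 0, and let γ : ℝ → ℍ be continuous on [0,1] with (γ 1 : ℂ) = λ²·(γ 0 : ℂ) (so the endpoint of γ is the image of its starting point under the hyperbolic translation z ↦ λ²z along the imaginary axis, whose translation length is 2·log λ). Suppose |Re(γ t)| ≥ sinh(D)·Im(γ t) for every t ∈ [0,1] (i.e., γ stays at hyperbolic distance at least D from the imaginary-axis geodesic). Then the length of γ over [0,1] is at least cosh(D)·2·log λ: eVariationOn γ (Icc 0 1) ≥ cosh(D)·2·log λ. -/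
open UpperHalfPlane Set

lemma hyp_key (D : ℝ) (z w : ℍ) (hz : Real.sinh D * z.im ≤ |z.re|) (hD : 0 ≤ D)
    (hw : Real.sinh D * w.im ≤ |w.re|) :
    Real.cosh D * (Real.log ‖(w : ℂ)‖ - Real.log ‖(z : ℂ)‖) ≤ 2 * Real.sinh (dist z w / 2) := by
  have hzi := z.im_pos
  have hwi := w.im_pos
  have hS : 0 ≤ Real.sinh D := Real.sinh_nonneg_iff.2 hD
  have hC : 0 < Real.cosh D := Real.cosh_pos D
  have aux : ∀ v : ℍ, Real.sinh D * v.im ≤ |v.re| → Real.cosh D * v.im ≤ ‖(v : ℂ)‖ := by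
    intro v hv
    have e : ‖(v : ℂ)‖ ^ 2 = v.re ^ 2 + v.im ^ 2 := by
      rw [Complex.sq_norm, Complex.normSq_apply]; simp; ring
    have hv2 : (Real.sinh D * v.im) ^ 2 ≤ |v.re| ^ 2 := by
      have := v.im_pos
      gcongr
    rw [sq_abs] at hv2
    refine (le_abs_self _).trans (abs_le_of_sq_le_sq ?_ (norm_nonneg _))
    rw [e, mul_pow, Real.cosh_sq]
    linarith
  have hr := aux z hz
  have hr' := aux w hw
  have rpos : 0 < ‖(z : ℂ)‖ := lt_of_lt_of_le (by positivity) hr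
  have rpos' : 0 < ‖(w : ℂ)‖ := lt_of_lt_of_le (by positivity) hr'
  have e1 : ‖(z : ℂ)‖ ^ 2 = z.re ^ 2 + z.im ^ 2 := by
    rw [Complex.sq_norm, Complex.normSq_apply]; simp; ring
  have e2 : ‖(w : ℂ)‖ ^ 2 = w.re ^ 2 + w.im ^ 2 := by
    rw [Complex.sq_norm, Complex.normSq_apply]; simp; ring
  generalize hR : ‖(z : ℂ)‖ = r at *
  generalize hR' : ‖(w : ℂ)‖ = r' at *
  rcases le_total (Real.log r') (Real.log r) with h | h
  · have : 0 ≤ Real.sinh (dist z w / 2) := Real.sinh_nonneg_iff.2 (by positivity)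
    nlinarith
  set s := Real.log r' - Real.log r with hs
  have s0 : 0 ≤ s := sub_nonneg.2 h
  have h1 : s / 2 ≤ Real.sinh (s / 2) := Real.self_le_sinh_iff.2 (by positivity)
  -- exact formula
  have h2 : Real.cosh s * (2 * r * r') = r ^ 2 + r' ^ 2 := by
    rw [Real.cosh_eq, hs, Real.exp_neg, Real.exp_sub, Real.exp_log rpos, Real.exp_log rpos']
    field_simp
    ring
  have h3 : Real.cosh (dist z w) * (2 * z.im * w.im) = r ^ 2 + r' ^ 2 - 2 * z.re * w.re := by
    rw [UpperHalfPlane.cosh_dist, Complex.dist_eq, Complex.sq_norm, Complex.normSq_apply, e1, e2]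
    simp
    field_simp
    ring
  have h4 : Real.cosh s = 1 + 2 * Real.sinh (s / 2) ^ 2 := by
    have := Real.cosh_two_mul (s / 2)
    rw [Real.cosh_sq] at this
    rw [show s = 2 * (s / 2) by ring, this]; ring_nf
  have h5 : Real.cosh (dist z w) = 1 + 2 * Real.sinh (dist z w / 2) ^ 2 := by
    have := Real.cosh_two_mul (dist z w / 2)
    rw [Real.cosh_sq] at this
    rw [show dist z w = 2 * (dist z w / 2) by ring, this]; ring_nf
  have h6 : z.re * w.re + z.im * w.im ≤ r * r' := by
    refine (le_abs_self _).trans (abs_le_of_sq_le_sq ?_ (by positivity))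
    rw [mul_pow, e1, e2]
    nlinarith [sq_nonneg (z.re * w.im - z.im * w.re)]
  have h7 : Real.cosh D ^ 2 * (z.im * w.im) ≤ r * r' := by
    calc _ = (Real.cosh D * z.im) * (Real.cosh D * w.im) := by ring
      _ ≤ _ := by gcongr
  have hm : 0 < z.im * w.im := by positivity
  have h8 : (Real.cosh D * Real.sinh (s / 2)) ^ 2 ≤ Real.sinh (dist z w / 2) ^ 2 := by
    have h9 := mul_le_mul_of_nonneg_right h7 (sq_nonneg (Real.sinh (s / 2)))
    rw [h4] at h2
    rw [h5] at h3
    have : (Real.cosh D * Real.sinh (s / 2)) ^ 2 * (z.im * w.im) ≤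
      Real.sinh (dist z w / 2) ^ 2 * (z.im * w.im) := by nlinarith
    exact le_of_mul_le_mul_right this hm
  have h10 := abs_le_of_sq_le_sq h8 (Real.sinh_nonneg_iff.2 (by positivity))
  have := (le_abs_self _).trans h10
  nlinarith

lemma sinh_near (ε : ℝ) (hε : 0 < ε) : ∃ δ > 0, ∀ x : ℝ, 0 ≤ x → x < δ →
    Real.sinh x ≤ (1 + ε) * x := by
  have h := (Real.hasDerivAt_sinh 0).isLittleO.def hε
  obtain ⟨δ, hδ, h⟩ := Metric.eventually_nhds_iff.1 h
  refine ⟨δ, hδ, fun x hx hxd => ?_⟩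
  have := h (y := x) (by simpa [abs_of_nonneg hx] using hxd)
  simp [abs_of_nonneg hx] at this
  have := (abs_le.1 this).2
  linarith

lemma var_eps
    (l : ℝ) (hl : 1 < l) (D : ℝ) (hD : 0 ≤ D)
    (γ : ℝ → ℍ) (hγ : ContinuousOn γ (Set.Icc 0 1))
    (hend : (γ 1 : ℂ) = (l ^ 2 : ℝ) * (γ 0 : ℂ))
    (hfar : ∀ t ∈ Set.Icc (0 : ℝ) 1, Real.sinh D * (γ t).im ≤ |(γ t).re|) (ε : ℝ) (hε : 0 < ε) :
    ENNReal.ofReal (Real.cosh D * (2 * Real.log l) / (1 + ε)) ≤ eVariationOn γ (Set.Icc 0 1) := by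
  obtain ⟨δ, hδ, hsinh⟩ := sinh_near ε hε
  obtain ⟨η, hη, hu⟩ := Metric.uniformContinuousOn_iff.1
    (isCompact_Icc.uniformContinuousOn_of_continuous hγ) δ hδ
  obtain ⟨n, hn⟩ := exists_nat_one_div_lt hη
  set u : ℕ → ℝ := fun i => (i : ℝ) / (n + 1) with hudef
  have hn0 : (0 : ℝ) < n + 1 := by positivity
  have um : Monotone u := fun i j hij => by simp only [hudef]; gcongr
  have us : ∀ i ≤ n + 1, u i ∈ Set.Icc (0 : ℝ) 1 := by
    intro i hi
    refine ⟨by simp only [hudef]; positivity, ?_⟩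
    simp only [hudef]
    rw [div_le_one hn0]
    exact_mod_cast hi
  have hsum := eVariationOn.sum_le_of_monotoneOn_Iic (f := γ) (s := Set.Icc (0 : ℝ) 1)
    (n := n + 1) (u := u) (um.monotoneOn _) us
  refine le_trans ?_ hsum
  simp only [edist_dist]
  rw [← ENNReal.ofReal_sum_of_nonneg (fun _ _ => dist_nonneg)]
  apply ENNReal.ofReal_le_ofReal
  set L : ℕ → ℝ := fun i => Real.log ‖(γ (u i) : ℂ)‖ with hL
  have htel : ∑ i ∈ Finset.range (n + 1), (L (i + 1) - L i) = 2 * Real.log l := by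
    rw [Finset.sum_range_sub]
    have a0 : u 0 = 0 := by simp [hudef]
    have a1 : u (n + 1) = 1 := by simp only [hudef]; push_cast; field_simp
    have hne : ‖(γ 0 : ℂ)‖ ≠ 0 := norm_ne_zero_iff.2 (UpperHalfPlane.ne_zero _)
    simp only [hL, a0, a1, hend, norm_mul]
    rw [Real.log_mul (by simp; positivity) hne, Complex.norm_real, Real.norm_eq_abs, Real.log_abs,
      Real.log_pow]
    push_cast; ring
  rw [← htel, div_le_iff₀ (by positivity), Finset.mul_sum, Finset.sum_mul]
  refine Finset.sum_le_sum fun i hi => ?_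
  have hi := Finset.mem_range.1 hi
  have m1 := us i (by omega)
  have m2 := us (i + 1) (by omega)
  have k := hyp_key D _ _ (hfar _ m1) hD (hfar _ m2)
  have hd : dist (γ (u i)) (γ (u (i + 1))) < δ := by
    apply hu _ m1 _ m2
    rw [dist_comm, Real.dist_eq]
    have : u (i + 1) - u i = 1 / (n + 1) := by simp only [hudef]; push_cast; ring
    rw [this, abs_of_pos (by positivity)]
    exact hn
  have d0 : 0 ≤ dist (γ (u i)) (γ (u (i + 1))) := dist_nonneg
  have := hsinh (dist (γ (u i)) (γ (u (i + 1))) / 2) (by linarith) (by linarith)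
  rw [dist_comm (γ (u (i + 1)))]
  simp only [hL]
  linarith

/-- A continuous path in the hyperbolic plane joining a point `γ 0` to its image
`λ² · (γ 0)` under the hyperbolic translation of length `2 log λ` along the imaginary
axis, and staying at hyperbolic distance at least `D` from the imaginary-axis geodesic,
has length at least `cosh D · 2 log λ`. -/
theorem eVariationOn_ge_cosh_mul_translation_length
    (l : ℝ) (hl : 1 < l) (D : ℝ) (hD : 0 ≤ D)
    (γ : ℝ → ℍ) (hγ : ContinuousOn γ (Set.Icc 0 1))
    (hend : (γ 1 : ℂ) = (l ^ 2 : ℝ) * (γ 0 : ℂ))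
    (hfar : ∀ t ∈ Set.Icc (0 : ℝ) 1, Real.sinh D * (γ t).im ≤ |(γ t).re|) :
    ENNReal.ofReal (Real.cosh D * (2 * Real.log l)) ≤ eVariationOn γ (Set.Icc 0 1) := by
  have hc : ContinuousAt
      (fun ε : ℝ => ENNReal.ofReal (Real.cosh D * (2 * Real.log l) / (1 + ε))) 0 := by
    apply ENNReal.continuous_ofReal.continuousAt.comp
    apply ContinuousAt.div continuousAt_const (by fun_prop) (by norm_num)
  have ht := (hc.tendsto).mono_left (nhdsWithin_le_nhds (s := Set.Ioi (0 : ℝ)))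
  simp only [add_zero, div_one] at ht
  refine le_of_tendsto ht ?_
  filter_upwards [self_mem_nhdsWithin] with ε hε
  exact var_eps l hl D hD γ hγ hend hfar ε hε
end
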